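/- arXiv:2603.04776 — 8 statements merged into one kernel-verified Lean document; each statement's English description precedes it below -/
import Mathlib

section
/- For every 1 ≤ i ≤ 6, f_i ∘ f_i = id on A^ℤ; in particular f_i is a bijection of A^ℤ (indeed a self-inverse homeomorphism). -/
/-!
Call a letter `c` a trigger for `i` if it is `#` or some `a j` with `j ≠ i` in the same block
of three indices as `i`. The map `g i · c` swaps `a i` and `ta i` when `c` is a trigger and is the
identity otherwise. Neither `a i` nor `ta i` is a trigger for `i`, and these are the only letters
that `f i` changes, so `f i` preserves the set of positions followed by a trigger. Applying `f i`
twice therefore performs the same swap twice at each position, whence `f i ∘ f i = id`.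
Continuity holds because each coordinate of `f i x` is a function of two coordinates of `x`.
-/

/-- The alphabet: 13 symbols, `a i` for `1 ≤ i ≤ 6` are positions `0..5`,
`ta i` (the tilde symbols) are positions `6..11`, and `hash` is position `12`. -/
abbrev A : Type := Fin 13

def a (i : ℕ) : A := if h : 1 ≤ i ∧ i ≤ 6 then ⟨i - 1, by omega⟩ else ⟨0, by omega⟩

def ta (i : ℕ) : A := if h : 1 ≤ i ∧ i ≤ 6 then ⟨i + 5, by omega⟩ else ⟨0, by omega⟩

def hash : A := ⟨12, by omega⟩

/-- The two-sided shift. -/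
def shiftZ {B : Type*} (x : ℤ → B) : ℤ → B := fun n => x (n + 1)

/-- The one-sided shift. -/
def shift1 {B : Type*} (x : ℕ → B) : ℕ → B := fun n => x (n + 1)

open Classical in
/-- The map `g i : A × A → A`. -/
noncomputable def g (i : ℕ) (b c : A) : A :=
  if b = a i ∧ (c = hash ∨ ∃ j : ℕ, (if i ≤ 3 then 1 else 4) ≤ j ∧
      j ≤ (if i ≤ 3 then 3 else 6) ∧ j ≠ i ∧ c = a j) then ta i
  else if b = ta i ∧ (c = hash ∨ ∃ j : ℕ, (if i ≤ 3 then 1 else 4) ≤ j ∧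
      j ≤ (if i ≤ 3 then 3 else 6) ∧ j ≠ i ∧ c = a j) then a i
  else b

/-- The map `f i : A^ℤ → A^ℤ`, `f i x k = g i (x k) (x (k+1))`. -/
noncomputable def f (i : ℕ) : (ℤ → A) → (ℤ → A) := fun x k => g i (x k) (x (k + 1))

/-- A (two-sided) subshift: nonempty, closed and shift-invariant. -/
def IsSubshift {B : Type*} [TopologicalSpace B] (X : Set (ℤ → B)) : Prop :=
  X.Nonempty ∧ IsClosed X ∧ shiftZ '' X = X

/-- The cylinder `[#w#]`. -/
def cyl (w : List A) : Set (ℤ → A) :=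
  {x | x 0 = hash ∧ (∀ k : ℕ, k < w.length → x (1 + (k : ℤ)) = w.getD k hash) ∧
    x (1 + (w.length : ℤ)) = hash}

/-- The word map `f i *` representing `f i`. -/
noncomputable def fstar (i : ℕ) : List A → List A
  | [] => []
  | [b] => [g i b hash]
  | b :: c :: rest => g i b c :: fstar i (c :: rest)

/-- Composition `f_{l₀} ∘ f_{l₁} ∘ ⋯`. -/
noncomputable def fcomp (l : List ℕ) : (ℤ → A) → (ℤ → A) :=
  l.foldr (fun i F => f i ∘ F) id

/-- The binary code word of length 22 associated to each symbol. -/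
def rhoWord (s : A) : List Bool :=
  if (s : ℕ) < 6 then
    [true, true, false, true, false, false] ++ List.replicate (2 * (6 - (s : ℕ))) false
      ++ [true, true] ++ List.replicate (2 * ((s : ℕ) + 1)) false
  else if (s : ℕ) < 12 then
    [true, true, false, true, false, false, true, true]
      ++ List.replicate (2 * (11 - (s : ℕ))) false
      ++ [true, true] ++ List.replicate (2 * ((s : ℕ) - 5)) false
  else List.replicate 10 true ++ [false, true] ++ List.replicate 10 true

/-- `rho s r` is the `r`-th letter of the code word of `s`. -/
def rho (s : A) (r : ℕ) : Bool := (rhoWord s).getD r false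

/-- `ρ⁺(x)` : the concatenation `ρ(x 0) ρ(x 1) ρ(x 2) ⋯`. -/
def rhoPlus (x : ℤ → A) : ℕ → Bool := fun n => rho (x ((n / 22 : ℕ) : ℤ)) (n % 22)

/-- `φ(X) = ⋃_{0 ≤ n < 22} Sⁿ({ρ⁺(x) : x ∈ X})`. -/
def phi (X : Set (ℤ → A)) : Set (ℕ → Bool) :=
  ⋃ n < 22, shift1^[n] '' (rhoPlus '' X)


/-- The letter `c` makes `g i · c` swap `a i` and `ta i`. -/
def IsTrigger (i : ℕ) (c : A) : Prop :=
  c = hash ∨ ∃ j : ℕ, (if i ≤ 3 then 1 else 4) ≤ j ∧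
    j ≤ (if i ≤ 3 then 3 else 6) ∧ j ≠ i ∧ c = a j

open Classical in
lemma g_eq (i : ℕ) (b c : A) :
    g i b c = if b = a i ∧ IsTrigger i c then ta i
      else if b = ta i ∧ IsTrigger i c then a i else b := by
  unfold g IsTrigger
  congr

lemma a_val {i : ℕ} (h1 : 1 ≤ i) (h6 : i ≤ 6) : (a i).val = i - 1 := by
  simp [a, h1, h6]

lemma ta_val {i : ℕ} (h1 : 1 ≤ i) (h6 : i ≤ 6) : (ta i).val = i + 5 := by
  simp [ta, h1, h6]

lemma a_ne_ta {i : ℕ} (h1 : 1 ≤ i) (h6 : i ≤ 6) : a i ≠ ta i := by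
  intro h
  have := congrArg Fin.val h
  rw [a_val h1 h6, ta_val h1 h6] at this
  omega

lemma not_isTrigger_a {i : ℕ} (h1 : 1 ≤ i) (h6 : i ≤ 6) : ¬ IsTrigger i (a i) := by
  rintro (h | ⟨j, hj1, hj2, hji, h⟩)
  · have := congrArg Fin.val h
    rw [a_val h1 h6] at this
    simp only [_root_.hash] at this
    omega
  · have := congrArg Fin.val h
    rw [a_val h1 h6, a_val (by split_ifs at hj1 <;> omega) (by split_ifs at hj2 <;> omega)] at this
    split_ifs at hj1 <;> omega

lemma not_isTrigger_ta {i : ℕ} (h1 : 1 ≤ i) (h6 : i ≤ 6) : ¬ IsTrigger i (ta i) := by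
  rintro (h | ⟨j, hj1, hj2, hji, h⟩)
  · have := congrArg Fin.val h
    rw [ta_val h1 h6] at this
    simp only [_root_.hash] at this
    omega
  · have := congrArg Fin.val h
    rw [ta_val h1 h6, a_val (by split_ifs at hj1 <;> omega) (by split_ifs at hj2 <;> omega)] at this
    split_ifs at hj2 <;> omega

lemma isTrigger_g {i : ℕ} (h1 : 1 ≤ i) (h6 : i ≤ 6) (c d : A) :
    IsTrigger i (g i c d) ↔ IsTrigger i c := by
  have ha := not_isTrigger_a h1 h6
  have hta := not_isTrigger_ta h1 h6
  rw [g_eq]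
  split_ifs with h h'
  · simp [h.1, ha, hta]
  · simp [h'.1, ha, hta]
  · rfl

lemma g_g {i : ℕ} (h1 : 1 ≤ i) (h6 : i ≤ 6) (b c d : A) :
    g i (g i b c) (g i c d) = b := by
  have hne := a_ne_ta h1 h6
  rw [g_eq i (g i b c), isTrigger_g h1 h6, g_eq i b c]
  by_cases hc : IsTrigger i c
  · by_cases hb : b = a i
    · simp [hb, hc, hne.symm]
    · by_cases hb' : b = ta i
      · simp [hb', hc, hne.symm]
      · simp [hb, hb']
  · simp [hc]

lemma continuous_f (i : ℕ) : Continuous (f i) := by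
  refine continuous_pi fun k => ?_
  -- The finite alphabet is discrete, so every map `A × A → A` is continuous.
  have hg : Continuous fun p : A × A => g i p.1 p.2 := continuous_of_discreteTopology
  have hx : Continuous fun x : ℤ → A => (x k, x (k + 1)) :=
    (continuous_apply k).prodMk (continuous_apply (k + 1))
  exact hg.comp hx

/-- For every `1 ≤ i ≤ 6`, `f i ∘ f i = id`; in particular `f i` is a bijection,
indeed a self-inverse homeomorphism. -/
theorem stmt1 : ∀ i : ℕ, 1 ≤ i → i ≤ 6 →
    f i ∘ f i = id ∧ Function.Bijective (f i) ∧
    ∃ h : (ℤ → A) ≃ₜ (ℤ → A), ⇑h = f i ∧ h.symm = h := by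
  intro i h1 h6
  have hinv : Function.Involutive (f i) := fun x => funext fun k =>
    g_g h1 h6 (x k) (x (k + 1)) (x (k + 1 + 1))
  refine ⟨hinv.comp_self, hinv.bijective, ⟨hinv.toPerm, continuous_f i, continuous_f i⟩, rfl, ?_⟩
  ext x
  rfl
end

section
/- Let n ≥ 1, let i₁,…,iₙ ∈ {1,2,3} with i_k ≠ i_{k+1} for all 1 ≤ k < n, let m ≥ 0 and j₁,…,jₘ ∈ {4,5,6} with j_k ≠ j_{k+1} for all 1 ≤ k < m, and let w be any finite word over {a₁,a₂,a₃} of length L ≥ 0. Define x ∈ A^ℤ by: x(k) = w(k) for 0 ≤ k < L, x(L + k − 1) = ã_{i_k} for 1 ≤ k ≤ n, and x(k) = # for all other k ∈ ℤ. Then (f_{i₁} ∘ ⋯ ∘ f_{iₙ} ∘ f_{j₁} ∘ ⋯ ∘ f_{jₘ})(x)(L) = a_{i₁}; in particular this composition moves x, since x(L) = ã_{i₁} ≠ a_{i₁}. -/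
lemma g_before_tilde {i j : ℕ} (hj : 1 ≤ j ∧ j ≤ 3) (b : A) : g i b (ta j) = b := by
  obtain ⟨h1, h2⟩ := hj
  have key : ¬ (ta j = hash ∨ ∃ k : ℕ, (if i ≤ 3 then 1 else 4) ≤ k ∧
      k ≤ (if i ≤ 3 then 3 else 6) ∧ k ≠ i ∧ ta j = a k) := by
    rintro (h | ⟨k, hk1, hk2, -, h⟩)
    · interval_cases j <;> exact absurd h (by decide)
    · have hk : 1 ≤ k ∧ k ≤ 6 := by split_ifs at hk1 hk2 <;> omega
      obtain ⟨hk3, hk4⟩ := hk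
      clear hk1 hk2
      interval_cases j <;> interval_cases k <;> exact absurd h (by decide)
  unfold g
  rw [if_neg (fun h => key h.2), if_neg (fun h => key h.2)]

lemma g_flip {i : ℕ} (hi : 1 ≤ i ∧ i ≤ 3) {c : A}
    (hc : c = hash ∨ ∃ j : ℕ, 1 ≤ j ∧ j ≤ 3 ∧ j ≠ i ∧ c = a j) : g i (ta i) c = a i := by
  obtain ⟨h1, h2⟩ := hi
  have hne : ta i ≠ a i := by interval_cases i <;> decide
  unfold g
  rw [if_neg (fun h => hne h.1), if_pos]
  simpa [h2] using hc

lemma g_keep {j : ℕ} (hj : 4 ≤ j ∧ j ≤ 6) {b : A}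
    (hb : b = hash ∨ ∃ i : ℕ, 1 ≤ i ∧ i ≤ 3 ∧ b = ta i) (c : A) : g j b c = b := by
  obtain ⟨h1, h2⟩ := hj
  have hne : b ≠ a j ∧ b ≠ ta j := by
    rcases hb with rfl | ⟨i, hi1, hi2, rfl⟩
    · interval_cases j <;> decide
    · interval_cases i <;> interval_cases j <;> decide
  unfold g
  rw [if_neg (fun h => hne.1 h.1), if_neg (fun h => hne.2 h.1)]

lemma fcomp_cons (i : ℕ) (l : List ℕ) (z : ℤ → A) (q : ℤ) :
    fcomp (i :: l) z q = g i (fcomp l z q) (fcomp l z (q + 1)) := rfl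

lemma fcomp_append (l l' : List ℕ) (z : ℤ → A) :
    fcomp (l ++ l') z = fcomp l (fcomp l' z) := by
  induction l with
  | nil => rfl
  | cons i l ih => funext q; simp only [List.cons_append, fcomp_cons, ih]

lemma fcomp_keep (J : List ℕ) (hJ : ∀ j ∈ J, 4 ≤ j ∧ j ≤ 6) (z : ℤ → A) (q : ℤ)
    (hq : z q = hash ∨ ∃ i : ℕ, 1 ≤ i ∧ i ≤ 3 ∧ z q = ta i) : fcomp J z q = z q := by
  induction J with
  | nil => rfl
  | cons j J ih =>
    rw [fcomp_cons, ih fun k hk => hJ k (List.mem_cons_of_mem _ hk)]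
    exact g_keep (hJ j List.mem_cons_self) hq _

/-- If `z` has only tilde symbols on `[s, p)`, then reads `ã` along the reduced word `Q` from
position `p`, then `#`, applying `Q` keeps `[s, p)` and puts at `p` the letter `a` of the head of
`Q` (or leaves `#` there when `Q` is empty). The window `[s, p)` is what makes the induction on `Q`
go through: it records that the tilde symbols still to be flipped are intact. -/
lemma fcomp_unzip (Q : List ℕ) (hQ : ∀ i ∈ Q, 1 ≤ i ∧ i ≤ 3) (hc : Q.IsChain (· ≠ ·))
    (z : ℤ → A) (s p : ℤ) (hsp : s ≤ p)
    (hl : ∀ q, s ≤ q → q < p → ∃ i : ℕ, (1 ≤ i ∧ i ≤ 3) ∧ z q = ta i)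
    (hz : ∀ k : ℕ, k < Q.length → z (p + (k : ℤ)) = ta (Q.getD k 0))
    (hend : z (p + (Q.length : ℤ)) = hash) :
    (∀ q, s ≤ q → q < p → fcomp Q z q = z q) ∧ fcomp Q z p = Q.head?.elim hash a := by
  induction Q generalizing p with
  | nil => exact ⟨fun _ _ _ => rfl, by simpa [fcomp] using hend⟩
  | cons i Q ih =>
    have hi := hQ i List.mem_cons_self
    have hzp : z p = ta i := by simpa using hz 0 (by simp)
    have hl' : ∀ q, s ≤ q → q < p + 1 → ∃ i : ℕ, (1 ≤ i ∧ i ≤ 3) ∧ z q = ta i := by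
      intro q h1 h2
      rcases eq_or_lt_of_le (Int.lt_add_one_iff.mp h2) with rfl | h
      · exact ⟨i, hi, hzp⟩
      · exact hl q h1 h
    obtain ⟨ih1, ih2⟩ := ih (fun k hk => hQ k (List.mem_cons_of_mem _ hk)) hc.tail (p + 1)
      (by omega) hl'
      (fun k hk => by
        have := hz (k + 1) (by simpa using hk)
        rw [show p + 1 + (k : ℤ) = p + ((k + 1 : ℕ) : ℤ) by push_cast; ring, this]
        simp)
      (by rw [← hend]; congr 1; simp; ring)
    constructor
    · intro q h1 h2
      obtain ⟨j, hj, hzj⟩ := hl' (q + 1) (by omega) (by omega)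
      rw [fcomp_cons, ih1 q h1 (by omega), ih1 (q + 1) (by omega) (by omega), hzj,
        g_before_tilde hj]
    · rw [fcomp_cons, ih1 p hsp (by omega), ih2, hzp]
      refine g_flip hi ?_
      cases Q with
      | nil => exact Or.inl rfl
      | cons j Q =>
        have hj := hQ j (by simp)
        have hij : i ≠ j := by simpa using (List.isChain_cons_cons.mp hc).1
        exact Or.inr ⟨j, hj.1, hj.2, hij.symm, rfl⟩

/-- For a reduced word `f_{i₁} ∘ ⋯ ∘ f_{iₙ} ∘ f_{j₁} ∘ ⋯ ∘ f_{jₘ}` (indices coded by the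
lists `I`, `J`), `n ≥ 1`, and the point `x` consisting of a word `w` over `{a₁,a₂,a₃}`
followed by `ã_{i₁} ⋯ ã_{iₙ}` and `#` elsewhere, the composition sends the value of `x`
at position `|w|` to `a_{i₁}`; in particular it moves `x`. -/
theorem stmt4 (I J : List ℕ) (hIn : 1 ≤ I.length)
    (hI : ∀ i ∈ I, 1 ≤ i ∧ i ≤ 3) (hIc : I.Chain' (· ≠ ·))
    (hJ : ∀ j ∈ J, 4 ≤ j ∧ j ≤ 6) (hJc : J.Chain' (· ≠ ·))
    (w : List A) (hw : ∀ c ∈ w, c = a 1 ∨ c = a 2 ∨ c = a 3)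
    (x : ℤ → A)
    (hx1 : ∀ k : ℕ, k < w.length → x (k : ℤ) = w.getD k hash)
    (hx2 : ∀ k : ℕ, k < I.length → x ((w.length : ℤ) + (k : ℤ)) = ta (I.getD k 0))
    (hx3 : ∀ k : ℤ, (k < 0 ∨ (w.length : ℤ) + (I.length : ℤ) ≤ k) → x k = hash) :
    fcomp (I ++ J) x (w.length : ℤ) = a (I.getD 0 0) ∧ fcomp (I ++ J) x ≠ x := by
  obtain _ | ⟨i, I⟩ := I
  · simp at hIn
  have hi := hI i List.mem_cons_self
  have hz : ∀ k : ℕ, k < (i :: I).length →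
      fcomp J x ((w.length : ℤ) + (k : ℤ)) = ta ((i :: I).getD k 0) := by
    intro k hk
    have hmem : (i :: I).getD k 0 ∈ i :: I := by
      rw [List.getD_eq_getElem _ _ hk]; exact List.getElem_mem hk
    have hb := hI _ hmem
    rw [fcomp_keep J hJ x _ (Or.inr ⟨_, hb.1, hb.2, hx2 k hk⟩), hx2 k hk]
  have hend : fcomp J x ((w.length : ℤ) + ((i :: I).length : ℤ)) = hash := by
    have h := hx3 ((w.length : ℤ) + ((i :: I).length : ℤ)) (Or.inr le_rfl)
    rw [fcomp_keep J hJ x _ (Or.inl h), h]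
  have hmain : fcomp ((i :: I) ++ J) x (w.length : ℤ) = a i := by
    rw [fcomp_append]
    exact (fcomp_unzip (i :: I) hI hIc (fcomp J x) w.length w.length le_rfl
      (fun q h1 h2 => absurd h2 (not_lt.mpr h1)) hz hend).2
  refine ⟨by simpa using hmain, fun h => ?_⟩
  have hx : x (w.length : ℤ) = ta i := by simpa using hx2 0 (by simp)
  rw [h, hx] at hmain
  obtain ⟨h1, h2⟩ := hi
  interval_cases i <;> exact absurd hmain (by decide)
end

section
/- Let n, m ≥ 0 with n + m ≥ 1, let i₁,…,iₙ ∈ {1,2,3} with i_k ≠ i_{k+1} for all 1 ≤ k < n, and let j₁,…,jₘ ∈ {4,5,6} with j_k ≠ j_{k+1} for all 1 ≤ k < m, and set F = f_{i₁} ∘ ⋯ ∘ f_{iₙ} ∘ f_{j₁} ∘ ⋯ ∘ f_{jₘ}. Then there are infinitely many finite words w over A∖{#} such that the image under F of the cylinder [#w#] = {x ∈ A^ℤ : x(0) = #, x(1+k) = w(k) for 0 ≤ k < |w|, x(1+|w|) = #} is not equal to [#w#]. In other words, F is not almost trivial. -/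
/-- The symbol carries a tilde. -/
def IsTilde (c : A) : Prop := ∃ i : ℕ, 1 ≤ i ∧ i ≤ 6 ∧ c = ta i

lemma ta_inj {i j : ℕ} (hi : 1 ≤ i ∧ i ≤ 6) (hj : 1 ≤ j ∧ j ≤ 6) (h : ta i = ta j) : i = j := by
  simp only [ta, hi, hj, and_self, dite_true, Fin.mk.injEq] at h
  omega

lemma ta_ne_a {i : ℕ} (j : ℕ) (hi : 1 ≤ i ∧ i ≤ 6) : ta i ≠ a j := by
  intro h
  by_cases hj : 1 ≤ j ∧ j ≤ 6
  · simp only [a, ta, hi, hj, and_self, dite_true, Fin.mk.injEq] at h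
    omega
  · simp only [a, ta, hi, hj, and_self, dite_true, dite_false, Fin.mk.injEq] at h
    omega

lemma ta_ne_hash (i : ℕ) : ta i ≠ hash := by
  intro h
  by_cases hi : 1 ≤ i ∧ i ≤ 6
  · simp only [ta, _root_.hash, hi, and_self, dite_true, Fin.mk.injEq] at h
    omega
  · simp only [ta, _root_.hash, hi, dite_false, Fin.mk.injEq] at h
    omega

lemma a_ne_hash (i : ℕ) : a i ≠ hash := by
  intro h
  by_cases hi : 1 ≤ i ∧ i ≤ 6
  · simp only [a, _root_.hash, hi, and_self, dite_true, Fin.mk.injEq] at h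
    omega
  · simp only [a, _root_.hash, hi, dite_false, Fin.mk.injEq] at h
    omega

lemma g_of_ne (i : ℕ) {b : A} (c : A) (h₁ : b ≠ a i) (h₂ : b ≠ ta i) : g i b c = b := by
  simp [g, h₁, h₂]

lemma g_of_tilde (i : ℕ) (b : A) {c : A} (hc : IsTilde c) : g i b c = b := by
  obtain ⟨k, hk, hk', rfl⟩ := hc
  simp [g, ta_ne_hash, ta_ne_a _ ⟨hk, hk'⟩]

lemma g_toggle_hash {i : ℕ} (hi : 1 ≤ i ∧ i ≤ 6) : g i (ta i) hash = a i := by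
  simp [g, ta_ne_a _ hi]

/-- The two groups of indices: `{1,2,3}` for `s = true` and `{4,5,6}` for `s = false`. -/
def InGroup (s : Bool) (i : ℕ) : Prop := if s then 1 ≤ i ∧ i ≤ 3 else 4 ≤ i ∧ i ≤ 6

lemma InGroup.range {s : Bool} {i : ℕ} (h : InGroup s i) : 1 ≤ i ∧ i ≤ 6 := by
  cases s <;> simp only [InGroup, if_true, Bool.false_eq_true, if_false] at h <;> omega

lemma g_toggle_a {s : Bool} {i j : ℕ} (hi : InGroup s i) (hj : InGroup s j) (hij : i ≠ j) :
    g i (ta i) (a j) = a i := by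
  have h : a j = hash ∨ ∃ k : ℕ, (if i ≤ 3 then 1 else 4) ≤ k ∧
      k ≤ (if i ≤ 3 then 3 else 6) ∧ k ≠ i ∧ a j = a k := by
    refine Or.inr ⟨j, ?_, ?_, hij.symm, rfl⟩ <;>
    cases s <;> simp only [InGroup, if_true, Bool.false_eq_true, if_false] at hi hj <;>
      split_ifs <;> omega
  rw [g, if_neg fun h' => ta_ne_a _ hi.range h'.1, if_pos ⟨rfl, h⟩]

lemma fcomp_cons_s6 (i : ℕ) (L : List ℕ) (x : ℤ → A) :
    fcomp (i :: L) x = f i (fcomp L x) := rfl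

lemma fcomp_append_s6 (I J : List ℕ) (x : ℤ → A) :
    fcomp (I ++ J) x = fcomp I (fcomp J x) := by
  induction I with
  | nil => rfl
  | cons i I ih => rw [List.cons_append, fcomp_cons_s6, fcomp_cons_s6, ih]

lemma fcomp_fixed (L : List ℕ) (x : ℤ → A) (r : ℤ)
    (h : ∀ i ∈ L, x r ≠ a i ∧ x r ≠ ta i) : fcomp L x r = x r := by
  induction L with
  | nil => rfl
  | cons i L ih =>
    have h1 := ih fun k hk => h k (List.mem_cons_of_mem _ hk)
    have h2 := h i List.mem_cons_self
    rw [fcomp_cons_s6, f, h1, g_of_ne _ _ h2.1 h2.2]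

/-- If `x` reads `ã_{l₁} … ã_{l_n} #` from position `p` on, then `F = f_{l₁} ∘ ⋯ ∘ f_{l_n}` turns
the symbol at `p` into `a_{l₁}`, and leaves unchanged any run of tilde symbols ending at `p - 1`.
The second part is what makes the induction on the number of maps work. -/
lemma fcomp_tilde {s : Bool} (L : List ℕ) (hL : ∀ i ∈ L, InGroup s i)
    (hc : L.IsChain (· ≠ ·)) (x : ℤ → A) (p : ℤ)
    (hx : ∀ (k : ℕ) (hk : k < L.length), x (p + k) = ta L[k])
    (hh : x (p + L.length) = hash) :
    fcomp L x p = (L.head?.elim hash a) ∧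
      ∀ q < p, (∀ r, q ≤ r → r < p → IsTilde (x r)) → fcomp L x q = x q := by
  induction L generalizing p with
  | nil => exact ⟨by simpa [fcomp] using hh, fun q _ _ => rfl⟩
  | cons i L ih =>
    have hi := hL i List.mem_cons_self
    have hp : x p = ta i := by
      have h0 := hx 0 (by simp)
      rw [Nat.cast_zero, add_zero] at h0
      exact h0
    obtain ⟨ih1, ih2⟩ := ih (fun k hk => hL k (List.mem_cons_of_mem _ hk)) hc.tail (p + 1)
      (fun k hk => by
        have := hx (k + 1) (by simpa using hk)
        rw [show p + 1 + (k : ℤ) = p + ((k + 1 : ℕ) : ℤ) by push_cast; ring, this]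
        simp)
      (by rw [← hh]; congr 1; simp only [List.length_cons]; push_cast; ring)
    have ht : ∀ q ≤ p, (∀ r, q ≤ r → r < p → IsTilde (x r)) → fcomp L x q = x q := by
      intro q hq hr
      refine ih2 q (by omega) fun r h1 h2 => ?_
      rcases eq_or_ne r p with rfl | hne
      · exact ⟨i, hi.range.1, hi.range.2, hp⟩
      · exact hr r h1 (by omega)
    have hpp : fcomp L x p = ta i := by
      rw [ht p le_rfl (fun r h1 h2 => absurd h2 (by omega)), hp]
    refine ⟨?_, fun q hq hr => ?_⟩
    · rw [fcomp_cons_s6, f, hpp, ih1]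
      cases L with
      | nil => exact g_toggle_hash hi.range
      | cons j L =>
        exact g_toggle_a hi (hL j (by simp)) (by simpa using (List.isChain_cons_cons.1 hc).1)
    · have h1 : IsTilde (fcomp L x (q + 1)) := by
        rw [ht (q + 1) (by omega) fun r h1 h2 => hr r (by omega) h2]
        rcases eq_or_ne (q + 1) p with h | hne
        · rw [h]; exact ⟨i, hi.range.1, hi.range.2, hp⟩
        · exact hr _ (by omega) (by omega)
      rw [fcomp_cons_s6, f, g_of_tilde _ _ h1, ht q hq.le hr]

/-- The case of `F ∘ G` where `F` is a nonempty reduced word in one group and `G` is a word in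
the other group (or empty). -/
lemma infinite_moved {s : Bool} (L K : List ℕ) (hne : L ≠ []) (hL : ∀ i ∈ L, InGroup s i)
    (hc : L.IsChain (· ≠ ·)) (hK : ∀ k ∈ K, InGroup (!s) k) :
    {w : List A | hash ∉ w ∧ fcomp (L ++ K) '' cyl w ≠ cyl w}.Infinite := by
  refine Set.infinite_of_injective_forall_mem
    (f := fun N : ℕ => List.replicate N (ta 1) ++ L.map ta) ?_ ?_
  · intro M N h
    have := congrArg List.length h
    simpa using this
  intro N
  refine ⟨?_, fun heq => ?_⟩
  · intro h
    rcases List.mem_append.1 h with h | h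
    · exact ta_ne_hash 1 (List.eq_of_mem_replicate h).symm
    · obtain ⟨i, -, hi⟩ := List.mem_map.1 h
      exact ta_ne_hash i hi
  set w : List A := List.replicate N (ta 1) ++ L.map ta with hw
  have hlen : w.length = N + L.length := by simp [hw]
  have hget : ∀ (k : ℕ) (hk : k < L.length), w.getD (N + k) hash = ta L[k] := by
    intro k hk
    rw [hw, List.getD_append_right _ _ _ _ (by simp)]
    simp [hk]
  -- A point of the cylinder: `w` from position `1` on, and `#` everywhere else.
  let x : ℤ → A := fun n => if 1 ≤ n then w.getD (n - 1).toNat hash else hash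
  have hxv : ∀ k : ℕ, x (1 + (k : ℤ)) = w.getD k hash := by
    intro k
    simp only [x]
    rw [if_pos (by omega), show (1 + (k : ℤ) - 1).toNat = k by omega]
  have hx : x ∈ cyl w := ⟨rfl, fun k _ => hxv k, by rw [hxv]; simp⟩
  have hxL : ∀ (k : ℕ) (hk : k < L.length), x (1 + (N : ℤ) + k) = ta L[k] := by
    intro k hk
    rw [← hget k hk, ← hxv]; congr 1; push_cast; ring
  have hxh : x (1 + (N : ℤ) + L.length) = hash := by
    rw [← hx.2.2, hlen]; congr 1; push_cast; ring
  have key := (fcomp_tilde L hL hc (fcomp K x) (1 + N)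
    (fun k hk => by
      rw [fcomp_fixed, hxL k hk]
      intro i hi
      have h1 := hL _ (List.getElem_mem hk)
      have h2 := hK i hi
      rw [hxL k hk]
      refine ⟨ta_ne_a _ h1.range, fun h => ?_⟩
      have h3 := ta_inj h1.range h2.range h
      rw [h3] at h1
      cases s <;> simp [InGroup] at h1 h2 <;> omega)
    (by
      rw [fcomp_fixed, hxh]
      intro i _
      rw [hxh]
      exact ⟨(a_ne_hash i).symm, (ta_ne_hash i).symm⟩)).1
  have hmem : fcomp (L ++ K) x ∈ cyl w := heq ▸ Set.mem_image_of_mem _ hx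
  obtain ⟨i, L', rfl⟩ := List.exists_cons_of_ne_nil hne
  have h := hmem.2.1 N (by rw [hlen]; simp)
  rw [fcomp_append_s6, key] at h
  have h0 := hget 0 (by simp)
  rw [Nat.add_zero] at h0
  rw [h0] at h
  exact ta_ne_a i (hL i List.mem_cons_self).range (by simpa using h.symm)

/-- For every nontrivial reduced word `F = f_{i₁} ∘ ⋯ ∘ f_{iₙ} ∘ f_{j₁} ∘ ⋯ ∘ f_{jₘ}`,
there are infinitely many hash-free finite words `w` such that `F '' [#w#] ≠ [#w#]`;
i.e. `F` is not almost trivial. -/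
theorem stmt6 (I J : List ℕ) (hn : 1 ≤ I.length + J.length)
    (hI : ∀ i ∈ I, 1 ≤ i ∧ i ≤ 3) (hIc : I.Chain' (· ≠ ·))
    (hJ : ∀ j ∈ J, 4 ≤ j ∧ j ≤ 6) (hJc : J.Chain' (· ≠ ·)) :
    {w : List A | hash ∉ w ∧ fcomp (I ++ J) '' cyl w ≠ cyl w}.Infinite := by
  by_cases h : I = []
  · subst h
    have hne : J ≠ [] := by
      rintro rfl
      simp at hn
    have := infinite_moved (s := false) J [] hne (by simpa [InGroup] using hJ) hJc (by simp)
    simpa using this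
  · exact infinite_moved (s := true) I J h (by simpa [InGroup] using hI) hIc
      (by simpa [InGroup] using hJ)
end

section
/- The coding ρ is uniquely readable: for all a, a', a'' ∈ A and all 1 ≤ n < 22, the length-22 word ρ(a) is not equal to the subword of the concatenation ρ(a')ρ(a'') starting at position n, i.e. there exists 0 ≤ r < 22 with ρ(a)(r) ≠ (ρ(a')ρ(a''))(n + r). -/
/-- The index, counted from `0`, of the unique block `01` in the code word of a symbol; `12` is
the symbol `#`. -/
def marker (s : A) : ℕ := if s = 12 then 5 else 1

theorem marker_eq (s : A) : marker s = 1 ∨ marker s = 5 := by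
  unfold marker; split_ifs <;> simp

theorem rhoWord_length : ∀ s : A, (rhoWord s).length = 22 := by decide

theorem no_block_one_zero :
    ∀ s : A, ∀ k < 11, rho s (2 * k) = true → rho s (2 * k + 1) ≠ false := by
  decide +kernel

theorem exists_odd_one_zero :
    ∀ s : A, ∃ j < 10, rho s (2 * j + 1) = true ∧ rho s (2 * j + 2) = false := by
  decide +kernel

theorem block_marker :
    ∀ s : A, rho s (2 * marker s) = false ∧ rho s (2 * marker s + 1) = true := by
  decide +kernel

theorem eq_marker_of_block :
    ∀ s : A, ∀ k < 11, rho s (2 * k) = false → rho s (2 * k + 1) = true → k = marker s := by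
  decide +kernel

/-- The bit after the block `01` tells `#` (bit `1`) from the letters (bit `0`). -/
theorem after_marker :
    ∀ s : A, rho s (2 * marker s + 2) = decide (marker s = 5) := by
  decide +kernel

theorem getD_append_left (s' s'' : A) {k : ℕ} (hk : k < 22) :
    (rhoWord s' ++ rhoWord s'').getD k false = rho s' k :=
  List.getD_append _ _ _ _ (by rw [rhoWord_length]; exact hk)

theorem getD_append_right (s' s'' : A) {k : ℕ} (hk : 22 ≤ k) :
    (rhoWord s' ++ rhoWord s'').getD k false = rho s'' (k - 22) := by
  rw [List.getD_append_right _ _ _ _ (by rw [rhoWord_length]; exact hk), rhoWord_length]; rfl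

/-- No aligned block of a concatenation is `10`, since it is a block of one of the two words. -/
theorem no_block_one_zero_append (s' s'' : A) {k : ℕ} (hk : k < 22)
    (h1 : (rhoWord s' ++ rhoWord s'').getD (2 * k) false = true) :
    (rhoWord s' ++ rhoWord s'').getD (2 * k + 1) false ≠ false := by
  by_cases h : k < 11
  · rw [getD_append_left _ _ (by omega)] at h1 ⊢
    exact no_block_one_zero s' k h h1
  · rw [getD_append_right _ _ (by omega)] at h1 ⊢
    rw [show 2 * k - 22 = 2 * (k - 11) by omega] at h1
    rw [show 2 * k + 1 - 22 = 2 * (k - 11) + 1 by omega]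
    exact no_block_one_zero s'' (k - 11) (by omega) h1

/-- If the `01` block of `s` falls on block `k` of `t` and the next bits agree, then the shift
between the two words is zero: markers `1` and `5` cannot be matched, as the next bits differ. -/
theorem marker_aligned (s t : A) {k : ℕ} (hk : k < 11)
    (h0 : rho s (2 * marker s) = rho t (2 * k))
    (h1 : rho s (2 * marker s + 1) = rho t (2 * k + 1))
    (h2 : rho s (2 * marker s + 2) = rho t (2 * k + 2)) : k = marker s := by
  obtain ⟨b0, b1⟩ := block_marker s
  obtain rfl := eq_marker_of_block t k hk (h0.symm.trans b0) (h1.symm.trans b1)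
  rw [after_marker, after_marker, decide_eq_decide] at h2
  rcases marker_eq s with hs | hs <;> rcases marker_eq t with ht | ht <;> omega

/-- The coding `ρ` is uniquely readable: no code word appears as a proper internal
subword of the concatenation of two code words. -/
theorem stmt7 (s s' s'' : A) (n : ℕ) (h1 : 1 ≤ n) (h2 : n < 22) :
    ∃ r : ℕ, r < 22 ∧ rho s r ≠ (rhoWord s' ++ rhoWord s'').getD (n + r) false := by
  by_contra! H
  obtain ⟨m, rfl | rfl⟩ := n.even_or_odd'
  · have hm := marker_eq s
    have e0 := H (2 * marker s) (by omega)
    have e1 := H (2 * marker s + 1) (by omega)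
    have e2 := H (2 * marker s + 2) (by omega)
    by_cases h : m + marker s < 11
    · by_cases h' : m + marker s = 10
      -- The last block of `ρ(s')` would be `01`, but `marker s'` is `1` or `5`.
      · rw [getD_append_left _ _ (by omega)] at e0 e1
        obtain ⟨b0, b1⟩ := block_marker s
        have := eq_marker_of_block s' (m + marker s) h
          (by rw [mul_add, ← e0, b0]) (by rw [mul_add, add_assoc, ← e1, b1])
        have := marker_eq s'
        omega
      · rw [getD_append_left _ _ (by omega)] at e0 e1 e2
        have := marker_aligned s s' h (by rw [e0, mul_add])
          (by rw [e1, mul_add, add_assoc]) (by rw [e2, mul_add, add_assoc])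
        omega
    · rw [getD_append_right _ _ (by omega)] at e0 e1 e2
      have := marker_aligned s s'' (k := m + marker s - 11) (by omega)
        (by rw [e0]; congr 1; omega) (by rw [e1]; congr 1; omega) (by rw [e2]; congr 1; omega)
      omega
  · obtain ⟨j, hj, j1, j0⟩ := exists_odd_one_zero s
    rw [H _ (by omega)] at j1 j0
    rw [show 2 * m + 1 + (2 * j + 1) = 2 * (m + j + 1) by omega] at j1
    rw [show 2 * m + 1 + (2 * j + 2) = 2 * (m + j + 1) + 1 by omega] at j0
    exact no_block_one_zero_append s' s'' (by omega) j1 j0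
end

section
/- The map φ is injective on subshifts: if X₁, X₂ ⊆ A^ℤ are subshifts with X₁ ≠ X₂, then φ(X₁) ≠ φ(X₂). -/
theorem rho_injective :
    ∀ s t : A, (∀ r < 22, rho s r = rho t r) → s = t := by
  decide +kernel

/-- The pattern `010`, which starts at position `2` of the code words of all letters other than
`hash`, occurs at no other phase. -/
theorem no_shifted_010 : ∀ t u : A, ∀ n < 22, 0 < n →
    ¬ (rho (if (2 + n) / 22 = 0 then t else u) ((2 + n) % 22) = false ∧
       rho (if (3 + n) / 22 = 0 then t else u) ((3 + n) % 22) = true ∧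
       rho (if (4 + n) / 22 = 0 then t else u) ((4 + n) % 22) = false) := by
  decide +kernel

theorem no_shifted_hash : ∀ t u : A, ∀ n < 22, 0 < n →
    ¬ ∀ r < 22, rho hash r = rho (if (r + n) / 22 = 0 then t else u) ((r + n) % 22) := by
  decide +kernel

theorem rho_010 : ∀ s : A, s ≠ hash → rho s 2 = false ∧ rho s 3 = true ∧ rho s 4 = false := by
  decide +kernel

/-- Synchronization: a code word occurs in the concatenation of the code words of `t` and `u`
only at the block boundaries. -/
theorem rho_sync (s t u : A) (n : ℕ) (hn : n < 22)
    (h : ∀ r < 22, rho s r = rho (if (r + n) / 22 = 0 then t else u) ((r + n) % 22)) :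
    n = 0 := by
  by_contra h0
  have hpos : 0 < n := Nat.pos_of_ne_zero h0
  by_cases hs : s = hash
  · subst hs
    exact no_shifted_hash t u n hn hpos h
  · obtain ⟨h2, h3, h4⟩ := rho_010 s hs
    refine no_shifted_010 t u n hn hpos ⟨?_, ?_, ?_⟩
    · rw [← h 2 (by norm_num), h2]
    · rw [← h 3 (by norm_num), h3]
    · rw [← h 4 (by norm_num), h4]

theorem shift1_iterate_apply {B : Type*} (n : ℕ) (y : ℕ → B) (k : ℕ) :
    shift1^[n] y k = y (k + n) := by
  induction n generalizing y with
  | zero => rfl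
  | succ n ih =>
    rw [Function.iterate_succ_apply, ih]
    simp only [shift1]
    congr 1

theorem eq_of_rhoPlus_eq_shift (x y : ℤ → A) (n : ℕ) (hn : n < 22)
    (h : shift1^[n] (rhoPlus y) = rhoPlus x) (k : ℕ) : y k = x k := by
  have h' : ∀ j, rhoPlus y (j + n) = rhoPlus x j := fun j => by
    rw [← h, shift1_iterate_apply]
  have hn0 : n = 0 := by
    refine rho_sync (x 0) (y 0) (y 1) n hn fun r hr => ?_
    have e := h' r
    simp only [rhoPlus, Nat.div_eq_of_lt hr, Nat.mod_eq_of_lt hr, Nat.cast_zero] at e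
    rw [← e]
    congr 1
    split_ifs with hd
    · rw [hd, Nat.cast_zero]
    · rw [show (r + n) / 22 = 1 by omega, Nat.cast_one]
  subst hn0
  refine rho_injective _ _ fun r hr => ?_
  have e := h' (22 * k + r)
  simp only [rhoPlus, add_zero] at e
  rwa [show (22 * k + r) / 22 = k by omega, show (22 * k + r) % 22 = r by omega] at e

theorem IsSubshift.translate_mem {B : Type*} [TopologicalSpace B] {X : Set (ℤ → B)}
    (h : IsSubshift X) {x : ℤ → B} (hx : x ∈ X) (m : ℕ) : (fun n => x (n + m)) ∈ X := by
  induction m with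
  | zero => simpa using hx
  | succ m ih =>
    rw [← h.2.2]
    refine ⟨_, ih, ?_⟩
    funext n
    simp only [shiftZ]
    congr 1
    push_cast
    ring

theorem IsSubshift.translate_neg_mem {B : Type*} [TopologicalSpace B] {X : Set (ℤ → B)}
    (h : IsSubshift X) {x : ℤ → B} (hx : x ∈ X) (m : ℕ) : (fun n => x (n - m)) ∈ X := by
  induction m with
  | zero => simpa using hx
  | succ m ih =>
    rw [← h.2.2] at ih
    obtain ⟨z, hz, hzx⟩ := ih
    convert hz using 1
    funext n
    have e := congrFun hzx (n - 1)
    simp only [shiftZ, sub_add_cancel] at e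
    rw [e]
    congr 1
    push_cast
    ring

theorem subset_of_phi_subset {X₁ X₂ : Set (ℤ → A)} (h1 : IsSubshift X₁) (h2 : IsSubshift X₂)
    (h : phi X₁ ⊆ phi X₂) : X₁ ⊆ X₂ := by
  intro x hx
  have key : ∀ m : ℕ, ∃ z ∈ X₂, ∀ n : ℤ, -(m : ℤ) ≤ n → z n = x n := by
    intro m
    have hmem : rhoPlus (fun n => x (n - m)) ∈ phi X₂ := by
      apply h
      simp only [phi, Set.mem_iUnion]
      exact ⟨0, by norm_num, _, ⟨_, h1.translate_neg_mem hx m, rfl⟩, rfl⟩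
    simp only [phi, Set.mem_iUnion] at hmem
    obtain ⟨n, hn, _, ⟨y, hy, rfl⟩, hyx⟩ := hmem
    refine ⟨_, h2.translate_mem hy m, fun j hj => ?_⟩
    obtain ⟨k, hk⟩ := Int.eq_ofNat_of_zero_le (show 0 ≤ j + m by omega)
    have e := eq_of_rhoPlus_eq_shift _ y n hn hyx k
    simp only [← hk, add_sub_cancel_right] at e
    exact e
  choose z hz hzx using key
  have hlim : Filter.Tendsto z Filter.atTop (nhds x) := by
    rw [tendsto_pi_nhds]
    intro n
    refine tendsto_const_nhds.congr' ?_
    filter_upwards [Filter.eventually_ge_atTop n.natAbs] with m hm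
    exact (hzx m n (by omega)).symm
  exact h2.2.1.mem_of_tendsto hlim (Filter.Eventually.of_forall hz)

/-- The map `φ` is injective on subshifts. -/
theorem stmt9 (X₁ X₂ : Set (ℤ → A)) (h1 : IsSubshift X₁) (h2 : IsSubshift X₂)
    (hne : X₁ ≠ X₂) : phi X₁ ≠ phi X₂ := by
  intro h
  exact hne (Set.Subset.antisymm (subset_of_phi_subset h1 h2 h.subset)
    (subset_of_phi_subset h2 h1 h.symm.subset))
end

section
/- For every subshift X ⊆ A^ℤ, the 22 sets Pₙ = Sⁿ({ρ⁺(x) : x ∈ X}) for 0 ≤ n < 22 are pairwise disjoint, each Pₙ is closed and open in the subspace φ(X), and φ(X) = ⋃_{0 ≤ n < 22} Pₙ; i.e. (Pₙ)_{0 ≤ n < 22} is a clopen partition of φ(X). -/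
/-- `Marked y p`: one of the two markers `110100` and `1¹⁰011` occurs in `y` at position `p`. -/
def Marked (y : ℕ → Bool) (p : ℕ) : Prop :=
  (∀ r < 6, y (p + r) = [true, true, false, true, false, false].getD r false) ∨
    (∀ r < 13, y (p + r) = (List.replicate 10 true ++ [false, true, true]).getD r false)

instance (y : ℕ → Bool) (p : ℕ) : Decidable (Marked y p) := by
  unfold Marked; infer_instance

/-- The two-block word `ρ(b)ρ(c)`, long enough to contain every marker that starts in `ρ(b)`. -/
def twoBlock (b c : A) (n : ℕ) : Bool := if n < 22 then rho b n else rho c (n - 22)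

/-- The finite check behind synchronization. -/
lemma marked_two : ∀ b c : A, ∀ d < 22, Marked (twoBlock b c) d ↔ d = 0 := by
  decide +kernel

lemma rhoPlus_two (x : ℤ → A) (q n : ℕ) (hn : n < 44) :
    rhoPlus x (22 * q + n) = twoBlock (x q) (x ((q + 1 : ℕ) : ℤ)) n := by
  unfold rhoPlus twoBlock
  split_ifs with h
  · rw [show (22 * q + n) / 22 = q by omega, show (22 * q + n) % 22 = n by omega]
  · rw [show (22 * q + n) / 22 = q + 1 by omega, show (22 * q + n) % 22 = n - 22 by omega]

/-- Synchronization: the markers in `ρ⁺(x)` sit exactly at the beginnings of the code words. -/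
lemma marked_rhoPlus (x : ℤ → A) (p : ℕ) : Marked (rhoPlus x) p ↔ p % 22 = 0 := by
  rw [← marked_two (x (p / 22 : ℕ)) (x ((p / 22 + 1 : ℕ) : ℤ)) (p % 22) (by omega)]
  have key : ∀ r < 13, rhoPlus x (p + r) =
      twoBlock (x (p / 22 : ℕ)) (x ((p / 22 + 1 : ℕ) : ℤ)) (p % 22 + r) := by
    intro r hr
    rw [← rhoPlus_two x _ _ (by omega)]
    congr 1
    omega
  unfold Marked
  refine or_congr (forall₂_congr fun r hr => ?_) (forall₂_congr fun r hr => ?_)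
  · rw [key r (by omega)]
  · rw [key r hr]

lemma shift1_iterate {B : Type*} (n : ℕ) (y : ℕ → B) (k : ℕ) :
    (shift1^[n] y) k = y (k + n) := by
  induction n generalizing y with
  | zero => rfl
  | succ n ih =>
    rw [Function.iterate_succ_apply, ih]
    exact congrArg y (by omega)

/-- Among the points of all `Pₘ` with `m < 22`, those of `Pₙ` are singled out by a marker at
position `22 - n`. -/
lemma marked_of_mem {X : Set (ℤ → A)} {n m : ℕ} (hn : n < 22) (hm : m < 22) {y : ℕ → Bool}
    (hy : y ∈ shift1^[m] '' (rhoPlus '' X)) : Marked y (22 - n) ↔ m = n := by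
  obtain ⟨_, ⟨x, -, rfl⟩, rfl⟩ := hy
  have h : Marked (shift1^[m] (rhoPlus x)) (22 - n) ↔ Marked (rhoPlus x) (22 - n + m) := by
    simp only [Marked, shift1_iterate, Nat.add_right_comm]
  rw [h, marked_rhoPlus]
  omega

lemma isOpen_marked (p : ℕ) : IsOpen {y | Marked y p} := by
  have h : ∀ (N : ℕ) (w : List Bool),
      IsOpen {y : ℕ → Bool | ∀ r < N, y (p + r) = w.getD r false} := by
    intro N w
    have e : {y : ℕ → Bool | ∀ r < N, y (p + r) = w.getD r false} =
        ⋂ r ∈ Set.Iio N, (fun y : ℕ → Bool => y (p + r)) ⁻¹' {w.getD r false} := by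
      ext y; simp
    rw [e]
    exact (Set.finite_Iio N).isOpen_biInter fun r _ =>
      (isOpen_discrete _).preimage (continuous_apply _)
  exact (h 6 _).union (h 13 _)

lemma continuous_rhoPlus : Continuous rhoPlus :=
  continuous_pi fun _ =>
    (continuous_of_discreteTopology (f := fun s : A => rho s _)).comp (continuous_apply _)

lemma continuous_shift1 : Continuous (shift1 : (ℕ → Bool) → ℕ → Bool) :=
  continuous_pi fun _ => continuous_apply _

/-- For every subshift `X`, the 22 sets `Pₙ = Sⁿ({ρ⁺(x) : x ∈ X})`, `0 ≤ n < 22`,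
form a clopen partition of `φ(X)`: they are pairwise disjoint, each is closed, each
is open in the subspace `φ(X)`, and their union is `φ(X)`. -/
theorem stmt11 (X : Set (ℤ → A)) (hX : IsSubshift X) :
    (∀ n < 22, ∀ m < 22, n ≠ m →
      Disjoint (shift1^[n] '' (rhoPlus '' X)) (shift1^[m] '' (rhoPlus '' X))) ∧
    (∀ n < 22, IsClosed (shift1^[n] '' (rhoPlus '' X))) ∧
    (∀ n < 22, ∃ U : Set (ℕ → Bool), IsOpen U ∧
      shift1^[n] '' (rhoPlus '' X) = U ∩ phi X) ∧
    phi X = ⋃ n < 22, shift1^[n] '' (rhoPlus '' X) := by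
  refine ⟨?_, ?_, ?_, rfl⟩
  · intro n hn m hm hne
    refine Set.disjoint_left.2 fun y hyn hym => hne ?_
    exact ((marked_of_mem hm hn hyn).1 ((marked_of_mem hm hm hym).2 rfl))
  · intro n _
    exact ((hX.2.1.isCompact.image continuous_rhoPlus).image
      (continuous_shift1.iterate n)).isClosed
  · intro n hn
    refine ⟨{y | Marked y (22 - n)}, isOpen_marked _, ?_⟩
    ext y
    constructor
    · intro hy
      exact ⟨(marked_of_mem hn hn hy).2 rfl, Set.mem_iUnion₂.2 ⟨n, hn, hy⟩⟩
    · rintro ⟨hmk, hy⟩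
      obtain ⟨m, hm, hym⟩ := Set.mem_iUnion₂.1 hy
      obtain rfl := (marked_of_mem hn hm hym).1 hmk
      exact hym
end

section
/- (Curtis–Hedlund–Lyndon) Let A be a finite set with the discrete topology, let X, Y ⊆ A^ℤ be subshifts, and let φ : X → Y be a conjugacy, i.e. a homeomorphism satisfying φ(S(x)) = S(φ(x)) for all x ∈ X. Then there exist n ∈ ℕ and a function C : A^{2n+1} → A such that for all x ∈ X and all i ∈ ℤ, φ(x)(i) = C(x(i−n), x(i−n+1), …, x(i+n)). -/
/-- A one-sided subshift: a nonempty closed forward-shift-invariant subset of `B^ℕ`. -/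
def IsOneSidedSubshift {B : Type*} [TopologicalSpace B] (X : Set (ℕ → B)) : Prop :=
  X.Nonempty ∧ IsClosed X ∧ shift1 '' X ⊆ X

/-- A continuous map from a closed set of configurations to a discrete space depends on a bounded
window only. Pairs with different values form a compact set; intersecting it with the decreasing
closed sets of pairs agreeing on `[-n, n]` gives the empty set in the limit, hence for some `n`. -/
theorem exists_uniform_window {A : Type*} [Finite A] [TopologicalSpace A] [DiscreteTopology A]
    {X : Set (ℤ → A)} (hX : IsClosed X) (f : X → A) (hf : Continuous f) :
    ∃ n : ℕ, ∀ x y : X, (∀ k : ℤ, |k| ≤ n → (x : ℤ → A) k = (y : ℤ → A) k) → f x = f y := by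
  have : CompactSpace X := isCompact_iff_compactSpace.mp hX.isCompact
  have hD : IsCompact {p : X × X | f p.1 ≠ f p.2} := by
    refine IsClosed.isCompact ?_
    exact (isClosed_discrete {q : A × A | q.1 ≠ q.2}).preimage
      ((hf.comp continuous_fst).prodMk (hf.comp continuous_snd))
  obtain ⟨n, hn⟩ := hD.elim_directed_family_closed
    (fun n : ℕ => {p : X × X | ∀ k : ℤ, |k| ≤ n → (p.1 : ℤ → A) k = (p.2 : ℤ → A) k})
    (fun n => by
      simp only [Set.ofPred_forall]
      refine isClosed_iInter fun k => isClosed_iInter fun _ => isClosed_eq ?_ ?_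
      · exact (continuous_apply k).comp (continuous_subtype_val.comp continuous_fst)
      · exact (continuous_apply k).comp (continuous_subtype_val.comp continuous_snd))
    (by
      rw [Set.eq_empty_iff_forall_notMem]
      rintro ⟨x, y⟩ ⟨hne, hxy⟩
      refine hne (congrArg f (Subtype.ext (funext fun k => ?_)))
      exact Set.mem_iInter.mp hxy k.natAbs k (by simp))
    (directed_of_isDirected_le fun a b hab p hp k hk =>
      hp k (hk.trans (by exact_mod_cast hab)))
  refine ⟨n, fun x y hxy => ?_⟩
  by_contra hne
  exact Set.eq_empty_iff_forall_notMem.mp hn (x, y) ⟨hne, hxy⟩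

/-- A shift-equivariant map commutes with all integer translations; negative ones exist in `X`
because the shift maps `X` onto itself. -/
theorem exists_translate {A : Type*} {X Y : Set (ℤ → A)} (hX : shiftZ '' X = X) (φ : X → Y)
    (hφ : ∀ (x : X) (hx : shiftZ (x : ℤ → A) ∈ X),
      (φ ⟨shiftZ (x : ℤ → A), hx⟩ : ℤ → A) = shiftZ (φ x : ℤ → A)) (x : X) (i : ℤ) :
    ∃ y : X, (∀ k, (y : ℤ → A) k = (x : ℤ → A) (k + i)) ∧
      ∀ k, (φ y : ℤ → A) k = (φ x : ℤ → A) (k + i) := by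
  induction i using Int.induction_on with
  | zero => exact ⟨x, by simp, by simp⟩
  | succ i ih =>
    obtain ⟨y, h1, h2⟩ := ih
    have hy : shiftZ (y : ℤ → A) ∈ X := hX.subset (Set.mem_image_of_mem _ y.2)
    refine ⟨⟨_, hy⟩, fun k => ?_, fun k => ?_⟩
    · simp only [shiftZ, h1]
      ring_nf
    · rw [hφ y hy]
      simp only [shiftZ, h2]
      ring_nf
  | pred i ih =>
    obtain ⟨⟨y, hy⟩, h1, h2⟩ := ih
    obtain ⟨z, hz, rfl⟩ : y ∈ shiftZ '' X := hX.symm.subset hy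
    have h3 := hφ ⟨z, hz⟩ hy
    refine ⟨⟨z, hz⟩, fun k => ?_, fun k => ?_⟩
    · have := h1 (k - 1)
      simp only [shiftZ, sub_add_cancel] at this
      refine this.trans ?_
      ring_nf
    · have := h2 (k - 1)
      rw [h3] at this
      simp only [shiftZ, sub_add_cancel] at this
      refine this.trans ?_
      ring_nf

/-- Curtis–Hedlund–Lyndon: every conjugacy `φ : X → Y` between subshifts over a finite
alphabet is given by a block code: there are `n` and `C : A^{2n+1} → A` with
`φ(x)(i) = C(x(i-n), …, x(i+n))` for all `x ∈ X` and `i ∈ ℤ`. -/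
theorem stmt15 {A : Type*} [Finite A] [TopologicalSpace A] [DiscreteTopology A]
    (X Y : Set (ℤ → A)) (hX : IsSubshift X) (hY : IsSubshift Y)
    (φ : ↥X ≃ₜ ↥Y)
    (hφ : ∀ (x : ↥X) (hx : shiftZ (x : ℤ → A) ∈ X),
      (φ ⟨shiftZ (x : ℤ → A), hx⟩ : ℤ → A) = shiftZ (φ x : ℤ → A)) :
    ∃ (n : ℕ) (C : (Fin (2 * n + 1) → A) → A),
      ∀ (x : ↥X) (i : ℤ),
        (φ x : ℤ → A) i = C (fun t => (x : ℤ → A) (i - (n : ℤ) + ((t : ℕ) : ℤ))) := by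
  obtain ⟨x₀, hx₀⟩ := hX.1
  have hf : Continuous fun x : X => (φ x : ℤ → A) 0 :=
    (continuous_apply 0).comp (continuous_subtype_val.comp φ.continuous)
  obtain ⟨n, hn⟩ := exists_uniform_window hX.2.1 _ hf
  have hfac : Function.FactorsThrough (fun x : X => (φ x : ℤ → A) 0)
      (fun (x : X) (t : Fin (2 * n + 1)) => (x : ℤ → A) (-(n : ℤ) + ((t : ℕ) : ℤ))) := by
    intro x y hxy
    refine hn x y fun k hk => ?_
    rw [abs_le] at hk
    have h := congrFun hxy ⟨(k + n).toNat, by omega⟩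
    have hk' : -(n : ℤ) + ((k + n).toNat : ℤ) = k := by omega
    simpa only [hk'] using h
  -- Off the windows occurring in `X`, the block map takes an arbitrary constant value.
  refine ⟨n, Function.extend
    (fun (x : X) (t : Fin (2 * n + 1)) => (x : ℤ → A) (-(n : ℤ) + ((t : ℕ) : ℤ)))
    (fun x : X => (φ x : ℤ → A) 0) (fun _ => x₀ 0), fun x i => ?_⟩
  obtain ⟨y, h1, h2⟩ := exists_translate hX.2.2 φ hφ x i
  have hw : (fun t : Fin (2 * n + 1) => (x : ℤ → A) (i - (n : ℤ) + ((t : ℕ) : ℤ))) =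
      fun t : Fin (2 * n + 1) => (y : ℤ → A) (-(n : ℤ) + ((t : ℕ) : ℤ)) := by
    funext t
    rw [h1]
    ring_nf
  rw [hw]
  refine Eq.trans ?_ (hfac.extend_apply _ y).symm
  simp [h2]
end

section
/- Let A be a finite set. For every one-sided subshift X ⊆ A^ℕ, the collection of one-sided subshifts Y ⊆ A^ℕ that are topologically conjugate to X (i.e. for which there exists a homeomorphism φ : X → Y with φ ∘ S = S ∘ φ) is countable. -/
/-- The sliding block code of a local rule `f` with window `k, …, k + n - 1`. -/
def blockCode {A : Type*} (n : ℕ) (f : (Fin n → A) → A) (x : ℕ → A) : ℕ → A :=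
  fun k => f fun i => x (k + i)

/-- A continuous map from a compact set of sequences to a discrete space depends on only finitely
many coordinates. -/
lemma exists_window {A : Type*} [TopologicalSpace A] [DiscreteTopology A]
    {X : Set (ℕ → A)} [CompactSpace X] {g : X → A} (hg : Continuous g) :
    ∃ n : ℕ, ∀ x y : X, (∀ i < n, (x : ℕ → A) i = (y : ℕ → A) i) → g x = g y := by
  -- The compact set of pairs separated by `g` is covered by the increasing open sets of pairs
  -- that differ at some coordinate below `n`.
  have hK : IsCompact {p : X × X | g p.1 ≠ g p.2} :=
    ((isClosed_discrete {q : A × A | q.1 ≠ q.2}).preimage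
      (by fun_prop : Continuous fun p : X × X => (g p.1, g p.2))).isCompact
  obtain ⟨n, hn⟩ := hK.elim_directed_cover
    (fun n : ℕ => {p : X × X | ∃ i < n, (p.1 : ℕ → A) i ≠ (p.2 : ℕ → A) i})
    (fun n => by
      have h : {p : X × X | ∃ i < n, (p.1 : ℕ → A) i ≠ (p.2 : ℕ → A) i} =
          ⋃ i, ⋃ (_ : i < n), {p : X × X | (p.1 : ℕ → A) i ≠ (p.2 : ℕ → A) i} := by
        ext p; simp
      rw [h]
      refine isOpen_iUnion fun i => isOpen_iUnion fun _ => ?_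
      exact isOpen_ne_fun
        ((continuous_apply i).comp (continuous_subtype_val.comp continuous_fst))
        ((continuous_apply i).comp (continuous_subtype_val.comp continuous_snd)))
    (fun p hp => by
      have hne : (p.1 : ℕ → A) ≠ (p.2 : ℕ → A) := fun h => hp (congrArg g (Subtype.ext h))
      obtain ⟨i, hi⟩ := Function.ne_iff.mp hne
      exact Set.mem_iUnion.mpr ⟨i + 1, i, Nat.lt_succ_self i, hi⟩)
    (Monotone.directed_le fun m n hmn p ⟨i, hi, h⟩ => ⟨i, hi.trans_le hmn, h⟩)
  refine ⟨n, fun x y h => ?_⟩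
  by_contra hne
  obtain ⟨i, hi, h'⟩ := hn (show (x, y) ∈ {p : X × X | g p.1 ≠ g p.2} from hne)
  exact h' (h i hi)

/-- Over a finite alphabet, every one-sided subshift has only countably many one-sided
subshifts topologically conjugate to it. -/
theorem stmt17 {A : Type*} [Finite A] [TopologicalSpace A] [DiscreteTopology A]
    (X : Set (ℕ → A)) (hX : IsOneSidedSubshift X) :
    {Y : Set (ℕ → A) | IsOneSidedSubshift Y ∧ ∃ φ : ↥X ≃ₜ ↥Y,
      ∀ (x : ↥X) (hx : shift1 (x : ℕ → A) ∈ X),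
        (φ ⟨shift1 (x : ℕ → A), hx⟩ : ℕ → A) = shift1 (φ x : ℕ → A)}.Countable := by
  classical
  obtain ⟨⟨x₀, hx₀⟩, hXc, hXs⟩ := hX
  have : CompactSpace X := isCompact_iff_compactSpace.mp hXc.isCompact
  have hS : ∀ x ∈ X, shift1 x ∈ X := fun x hx => hXs ⟨x, hx, rfl⟩
  refine (Set.countable_range
    (fun p : Σ n : ℕ, (Fin n → A) → A => blockCode p.1 p.2 '' X)).mono ?_
  rintro Y ⟨-, φ, hφ⟩
  obtain ⟨n, hn⟩ := exists_window (g := fun x : X => (φ x : ℕ → A) 0)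
    ((continuous_apply 0).comp (continuous_subtype_val.comp φ.continuous))
  -- Words that do not occur at the start of a point of `X` are sent to an arbitrary letter.
  let f : (Fin n → A) → A := Function.extend (fun (x : X) (i : Fin n) => (x : ℕ → A) i)
    (fun x : X => (φ x : ℕ → A) 0) (fun _ => x₀ 0)
  have hf : ∀ x : X, f (fun i : Fin n => (x : ℕ → A) i) = (φ x : ℕ → A) 0 := by
    intro x
    refine Function.FactorsThrough.extend_apply (fun a b hab => ?_) _ x
    exact hn a b fun i hi => congrFun hab ⟨i, hi⟩
  have key : ∀ (k : ℕ) (x : X), (φ x : ℕ → A) k = blockCode n f x k := by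
    intro k
    induction k with
    | zero => intro x; simp [blockCode, hf]
    | succ k ih =>
      intro x
      have h1 := congrFun (hφ x (hS x x.2)) k
      rw [ih] at h1
      simp only [blockCode, shift1] at h1 ⊢
      rw [← h1]
      exact congrArg f (funext fun i => congrArg x.1 (by omega))
  refine ⟨⟨n, f⟩, ?_⟩
  ext y
  constructor
  · rintro ⟨x, hx, rfl⟩
    rw [← funext fun k => key k ⟨x, hx⟩]
    exact (φ ⟨x, hx⟩).2
  · intro hy
    refine ⟨φ.symm ⟨y, hy⟩, (φ.symm ⟨y, hy⟩).2, ?_⟩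
    funext k
    simp [← key]
end
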